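/- arXiv:1309.7634 — 8 statements merged into one kernel-verified Lean document; each statement's English description precedes it below -/
import Mathlib

section
/- Let m ≥ 2, let F be an averaging operator, and let f : 𝕋_m → ℝ be bounded. Then there exists a unique function u : 𝕋_m × [0,∞) → ℝ such that: for every T > 0, u is bounded on 𝕋_m × [0,T]; for each x ∈ 𝕋_m the map t ↦ u(x,t) is continuous; and u(x,t) = K_f u(x,t) for all (x,t) ∈ 𝕋_m × [0,∞). -/
open MeasureTheory Real

/-- `F : ℝ^m → ℝ` is an averaging operator: continuous, `F(0,…,0)=0`, `F(1,…,1)=1`,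
positively homogeneous, translation equivariant, strictly below the max when the
coordinates are not all equal, and nondecreasing in each variable. -/
def IsAveraging (m : ℕ) (F : (Fin m → ℝ) → ℝ) : Prop :=
  Continuous F ∧
  F (fun _ => 0) = 0 ∧
  F (fun _ => 1) = 1 ∧
  (∀ (t : ℝ) (x : Fin m → ℝ), F (fun j => t * x j) = t * F x) ∧
  (∀ (t : ℝ) (x : Fin m → ℝ), F (fun j => t + x j) = t + F x) ∧
  (∀ x : Fin m → ℝ, (∃ i j, x i ≠ x j) → F x < ⨆ j, x j) ∧
  (∀ x y : Fin m → ℝ, (∀ j, x j ≤ y j) → F x ≤ F y)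

/-- The operator `K_f u(x,t) = ∫₀ᵗ e^{z−t} F(u((x,0),z),…,u((x,m−1),z)) dz + e^{−t} f(x)`,
where vertices of the directed tree `𝕋_m` are modeled as lists over `Fin m`
and `(x,i)` is the successor `x ++ [i]`. -/
noncomputable def Kop (m : ℕ) (F : (Fin m → ℝ) → ℝ) (f : List (Fin m) → ℝ)
    (u : List (Fin m) → ℝ → ℝ) (x : List (Fin m)) (t : ℝ) : ℝ :=
  (∫ z in (0:ℝ)..t, Real.exp (z - t) * F (fun i => u (x ++ [i]) z)) +
    Real.exp (-t) * f x

lemma aux_nonexp (m : ℕ) (F : (Fin m → ℝ) → ℝ) (hF : IsAveraging m F) (x y : Fin m → ℝ) (d : ℝ)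
    (h : ∀ i, |x i - y i| ≤ d) : |F x - F y| ≤ d := by
  obtain ⟨_, _, _, _, htr, _, hmono⟩ := hF
  rw [abs_le]
  constructor
  · have := hmono y (fun j => d + x j) (fun j => by have := (abs_le.1 (h j)).1; linarith)
    rw [htr] at this; linarith
  · have := hmono x (fun j => d + y j) (fun j => by have := (abs_le.1 (h j)).2; linarith)
    rw [htr] at this; linarith

lemma aux_contOn (m : ℕ) (F : (Fin m → ℝ) → ℝ) (hF : IsAveraging m F)
    (u : List (Fin m) → ℝ → ℝ) (s : Set ℝ) (hu : ∀ x, ContinuousOn (u x) s)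
    (x : List (Fin m)) (t : ℝ) :
    ContinuousOn (fun z => Real.exp (z - t) * F (fun i => u (x ++ [i]) z)) s := by
  apply ContinuousOn.mul (by fun_prop)
  exact hF.1.comp_continuousOn (continuousOn_pi.2 fun i => hu _)

lemma aux_half (m : ℕ) (F : (Fin m → ℝ) → ℝ) (hF : IsAveraging m F)
    (f : List (Fin m) → ℝ) (u v : List (Fin m) → ℝ → ℝ)
    (hu : ∀ x, ContinuousOn (u x) (Set.Ici (0:ℝ))) (hv : ∀ x, ContinuousOn (v x) (Set.Ici (0:ℝ)))
    (T C : ℝ) (hC : 0 ≤ C) (h : ∀ x, ∀ z ∈ Set.Icc (0:ℝ) T, |u x z - v x z| ≤ C * Real.exp z)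
    (x : List (Fin m)) (t : ℝ) (ht : t ∈ Set.Icc (0:ℝ) T) :
    |Kop m F f u x t - Kop m F f v x t| ≤ C / 2 * Real.exp t := by
  have hsub : Set.uIcc 0 t ⊆ Set.Ici (0:ℝ) := by
    rw [Set.uIcc_of_le ht.1]; exact fun z hz => hz.1
  have iu := ((aux_contOn m F hF u _ hu x t).mono hsub).intervalIntegrable (μ := volume)
  have iv := ((aux_contOn m F hF v _ hv x t).mono hsub).intervalIntegrable (μ := volume)
  have e : Kop m F f u x t - Kop m F f v x t = ∫ z in (0:ℝ)..t,
      (Real.exp (z - t) * F (fun i => u (x ++ [i]) z)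
        - Real.exp (z - t) * F (fun i => v (x ++ [i]) z)) := by
    rw [intervalIntegral.integral_sub iu iv]; unfold Kop; ring
  have key : ∀ z, HasDerivAt (fun z => C / 2 * Real.exp (2 * z - t))
      (C * Real.exp (2 * z - t)) z := by
    intro z
    have h1 : HasDerivAt (fun z : ℝ => 2 * z - t) 2 z := by
      simpa using ((hasDerivAt_id z).const_mul 2).sub_const t
    exact (h1.exp.const_mul (C/2)).congr_deriv (by ring)
  have hI : ∫ z in (0:ℝ)..t, C * Real.exp (2 * z - t)
      = C / 2 * Real.exp (2 * t - t) - C / 2 * Real.exp (2 * 0 - t) :=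
    intervalIntegral.integral_eq_sub_of_hasDerivAt (fun z _ => key z)
      (Continuous.intervalIntegrable (by fun_prop) _ _)
  rw [e, ← Real.norm_eq_abs]
  refine (intervalIntegral.norm_integral_le_of_norm_le (g := fun z => C * Real.exp (2 * z - t))
    ht.1 ?_ (Continuous.intervalIntegrable (by fun_prop) _ _)).trans ?_
  · refine Filter.Eventually.of_forall fun z hz => ?_
    rw [← mul_sub, Real.norm_eq_abs, abs_mul, abs_of_pos (Real.exp_pos _)]
    have h2 := aux_nonexp m F hF (fun i => u (x ++ [i]) z) (fun i => v (x ++ [i]) z)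
      (C * Real.exp z) (fun i => h _ z ⟨hz.1.le, hz.2.trans ht.2⟩)
    have h3 : C * Real.exp (2 * z - t) = Real.exp (z - t) * (C * Real.exp z) := by
      rw [show 2 * z - t = (z - t) + z by ring, Real.exp_add]; ring
    rw [h3]
    exact mul_le_mul_of_nonneg_left h2 (Real.exp_pos _).le
  · rw [hI, show 2 * t - t = t by ring]
    exact sub_le_self _ (mul_nonneg (by positivity) (Real.exp_pos _).le)

lemma aux_contK (m : ℕ) (F : (Fin m → ℝ) → ℝ) (hF : IsAveraging m F)
    (f : List (Fin m) → ℝ) (u : List (Fin m) → ℝ → ℝ)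
    (hu : ∀ x, Continuous (u x)) (x : List (Fin m)) : Continuous (Kop m F f u x) := by
  unfold Kop
  have hFc := hF.1
  refine Continuous.add ?_ (by fun_prop)
  refine intervalIntegral.continuous_parametric_intervalIntegral_of_continuous (f := fun t z => Real.exp (z - t) * F (fun i => u (x ++ [i]) z)) ?_ continuous_id
  have : ∀ i : Fin m, Continuous (u (x ++ [i])) := fun i => hu _
  simp only [Function.uncurry_def]
  fun_prop

noncomputable def auxSeq (m : ℕ) (F : (Fin m → ℝ) → ℝ) (f : List (Fin m) → ℝ) :
    ℕ → List (Fin m) → ℝ → ℝ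
  | 0 => fun _ _ => 0
  | n + 1 => Kop m F f (auxSeq m F f n)

lemma aux_seq_cont (m : ℕ) (F : (Fin m → ℝ) → ℝ) (hF : IsAveraging m F)
    (f : List (Fin m) → ℝ) (n : ℕ) : ∀ x, Continuous (auxSeq m F f n x) := by
  induction n with
  | zero => intro x; exact continuous_const
  | succ n ih => exact fun x => aux_contK m F hF f _ ih x

lemma aux_seq_diff (m : ℕ) (F : (Fin m → ℝ) → ℝ) (hF : IsAveraging m F)
    (f : List (Fin m) → ℝ) (M : ℝ) (hM : ∀ x, |f x| ≤ M) (n : ℕ) : ∀ x, ∀ t ≥ (0:ℝ),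
    |auxSeq m F f (n+1) x t - auxSeq m F f n x t| ≤ M / 2 ^ n * Real.exp t := by
  have hM0 : 0 ≤ M := (abs_nonneg _).trans (hM [])
  induction n with
  | zero =>
    intro x t ht
    simp only [auxSeq, Kop, hF.2.1]
    simp only [mul_zero, intervalIntegral.integral_zero, zero_add, sub_zero, pow_zero, div_one]
    rw [abs_mul, abs_of_pos (Real.exp_pos _), mul_comm]
    exact mul_le_mul (hM x) (Real.exp_le_exp.2 (by linarith)) (Real.exp_pos _).le hM0
  | succ n ih =>
    intro x t ht
    have := aux_half m F hF f (auxSeq m F f (n+1)) (auxSeq m F f n)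
      (fun x => (aux_seq_cont m F hF f _ x).continuousOn)
      (fun x => (aux_seq_cont m F hF f _ x).continuousOn) t (M / 2 ^ n) (by positivity)
      (fun x z hz => ih x z hz.1) x t ⟨ht, le_rfl⟩
    rw [pow_succ, ← div_div]
    exact this

lemma aux_exists (m : ℕ) (F : (Fin m → ℝ) → ℝ) (hF : IsAveraging m F)
    (f : List (Fin m) → ℝ) (M : ℝ) (hM : ∀ x, |f x| ≤ M) :
    ∃ u : List (Fin m) → ℝ → ℝ, ∀ n x, ∀ t ≥ (0:ℝ),
      |auxSeq m F f n x t - u x t| ≤ 2 * M / 2 ^ n * Real.exp t := by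
  have : ∀ x t, ∃ a, 0 ≤ t → ∀ n,
      |auxSeq m F f n x t - a| ≤ 2 * M / 2 ^ n * Real.exp t := by
    intro x t
    by_cases ht : 0 ≤ t
    · have hd : ∀ n, dist (auxSeq m F f n x t) (auxSeq m F f (n+1) x t)
          ≤ (2 * M * Real.exp t) / 2 / 2 ^ n := by
        intro n
        rw [dist_comm, Real.dist_eq]
        refine (aux_seq_diff m F hF f M hM n x t ht).trans (le_of_eq ?_)
        ring
      obtain ⟨a, ha⟩ := cauchySeq_tendsto_of_complete (cauchySeq_of_le_geometric_two hd)
      refine ⟨a, fun _ n => ?_⟩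
      have := dist_le_of_le_geometric_two_of_tendsto hd ha n
      rw [Real.dist_eq] at this
      refine this.trans (le_of_eq ?_)
      ring
    · exact ⟨0, fun h => absurd h ht⟩
  choose u hu using this
  exact ⟨u, fun n x t ht => hu x t ht n⟩

lemma aux_small (C a : ℝ) (h : ∀ n : ℕ, |a| ≤ C / 2 ^ n) : a = 0 := by
  have h1 : Filter.Tendsto (fun n : ℕ => C / 2 ^ n) Filter.atTop (nhds 0) := by
    have := (tendsto_pow_atTop_nhds_zero_of_lt_one (r := (1/2:ℝ)) (by norm_num)
      (by norm_num)).const_mul C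
    simpa [div_eq_mul_inv] using this
  exact abs_nonpos_iff.1 (ge_of_tendsto' h1 h)

/-- Existence and uniqueness of a solution of `u = K_f u`, locally bounded
in time and continuous in `t`, for a bounded initial datum `f`. Uniqueness is stated as
agreement on `𝕋_m × [0,∞)`. -/
theorem statement0 (m : ℕ) (hm : 2 ≤ m) (F : (Fin m → ℝ) → ℝ) (hF : IsAveraging m F)
    (f : List (Fin m) → ℝ) (hf : ∃ M : ℝ, ∀ x, |f x| ≤ M) :
    ∃ u : List (Fin m) → ℝ → ℝ,
      ((∀ T > (0:ℝ), ∃ M : ℝ, ∀ x, ∀ t ∈ Set.Icc (0:ℝ) T, |u x t| ≤ M) ∧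
        (∀ x, ContinuousOn (u x) (Set.Ici (0:ℝ))) ∧
        (∀ x, ∀ t ≥ (0:ℝ), u x t = Kop m F f u x t)) ∧
      (∀ v : List (Fin m) → ℝ → ℝ,
        ((∀ T > (0:ℝ), ∃ M : ℝ, ∀ x, ∀ t ∈ Set.Icc (0:ℝ) T, |v x t| ≤ M) ∧
          (∀ x, ContinuousOn (v x) (Set.Ici (0:ℝ))) ∧
          (∀ x, ∀ t ≥ (0:ℝ), v x t = Kop m F f v x t)) →
        ∀ x, ∀ t ≥ (0:ℝ), v x t = u x t) := by
  obtain ⟨M, hM⟩ := hf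
  have hM0 : 0 ≤ M := (abs_nonneg _).trans (hM [])
  obtain ⟨u, hu⟩ := aux_exists m F hF f M hM
  have ucont : ∀ x, ContinuousOn (u x) (Set.Ici (0:ℝ)) := by
    intro x
    have hl : TendstoLocallyUniformlyOn (fun n => auxSeq m F f n x) (u x) Filter.atTop
        (Set.Ici (0:ℝ)) := by
      rw [Metric.tendstoLocallyUniformlyOn_iff]
      intro ε hε t ht
      refine ⟨Set.Iio (t+1) ∩ Set.Ici 0, Filter.inter_mem
        (mem_nhdsWithin_of_mem_nhds (Iio_mem_nhds (by linarith))) self_mem_nhdsWithin, ?_⟩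
      have h1 : Filter.Tendsto (fun n : ℕ => 2 * M / 2 ^ n * Real.exp (t+1)) Filter.atTop
          (nhds 0) := by
        have := (tendsto_pow_atTop_nhds_zero_of_lt_one (r := (1/2:ℝ)) (by norm_num)
          (by norm_num)).const_mul (2 * M)
        simpa [div_eq_mul_inv] using this.mul_const (Real.exp (t+1))
      filter_upwards [h1.eventually (gt_mem_nhds hε)] with n hn z hz
      rw [dist_comm, Real.dist_eq]
      refine ((hu n x z hz.2).trans ?_).trans_lt hn
      exact mul_le_mul_of_nonneg_left (Real.exp_le_exp.2 (le_of_lt hz.1)) (by positivity)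
    exact hl.continuousOn (Filter.Frequently.of_forall fun n =>
      (aux_seq_cont m F hF f n x).continuousOn)
  have ufix : ∀ x, ∀ t ≥ (0:ℝ), u x t = Kop m F f u x t := by
    intro x t ht
    refine sub_eq_zero.1 (aux_small (2 * M * Real.exp t) _ fun n => ?_)
    have h1 := hu (n+1) x t ht
    have h2 := aux_half m F hF f (auxSeq m F f n) u
      (fun x => (aux_seq_cont m F hF f _ x).continuousOn) ucont t (2 * M / 2 ^ n)
      (by positivity) (fun x z hz => hu n x z hz.1) x t ⟨ht, le_rfl⟩
    have h3 : auxSeq m F f (n+1) x t = Kop m F f (auxSeq m F f n) x t := rfl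
    rw [h3] at h1
    rw [abs_sub_comm] at h1
    refine (abs_sub_le _ (Kop m F f (auxSeq m F f n) x t) _).trans ((add_le_add h1 h2).trans
      (le_of_eq ?_))
    rw [pow_succ]; field_simp; ring
  have ubd : ∀ T > (0:ℝ), ∃ M : ℝ, ∀ x, ∀ t ∈ Set.Icc (0:ℝ) T, |u x t| ≤ M := by
    intro T _
    refine ⟨2 * M * Real.exp T, fun x t ht => ?_⟩
    have := hu 0 x t ht.1
    simp only [auxSeq, zero_sub, abs_neg, pow_zero, div_one] at this
    exact this.trans (mul_le_mul_of_nonneg_left (Real.exp_le_exp.2 ht.2) (by positivity))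
  refine ⟨u, ⟨ubd, ucont, ufix⟩, ?_⟩
  rintro v ⟨vbd, vcont, vfix⟩ x t ht
  obtain ⟨A, hA⟩ := ubd (t+1) (by linarith)
  obtain ⟨B, hB⟩ := vbd (t+1) (by linarith)
  have hA0 : 0 ≤ A := (abs_nonneg _).trans (hA x t ⟨ht, by linarith⟩)
  have hB0 : 0 ≤ B := (abs_nonneg _).trans (hB x t ⟨ht, by linarith⟩)
  have ind : ∀ n : ℕ, ∀ x, ∀ z ∈ Set.Icc (0:ℝ) (t+1),
      |v x z - u x z| ≤ (B + A) / 2 ^ n * Real.exp z := by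
    intro n
    induction n with
    | zero =>
      intro x z hz
      have h1 := abs_sub (v x z) (u x z)
      have h2 := hA x z hz
      have h3 := hB x z hz
      have h4 := Real.one_le_exp hz.1
      simp only [pow_zero, div_one]
      nlinarith
    | succ n ih =>
      intro x z hz
      rw [vfix x z hz.1, ufix x z hz.1, pow_succ, ← div_div]
      exact aux_half m F hF f v u vcont ucont (t+1) _ (by positivity) ih x z hz
  refine sub_eq_zero.1 (aux_small ((B + A) * Real.exp t) _ fun n => ?_)
  refine (ind n x t ⟨ht, by linarith⟩).trans (le_of_eq ?_)
  ring
end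

section
/- Let m ≥ 2, let F be an averaging operator, and let f : 𝕋_m → ℝ be bounded. If u : 𝕋_m × [0,∞) → ℝ is bounded, continuous in t for each x, and satisfies u = K_f u on 𝕋_m × [0,∞), then |u(x,t)| ≤ sup_{y ∈ 𝕋_m} |f(y)| for all (x,t) ∈ 𝕋_m × [0,∞). -/
open MeasureTheory Real

/-- any bounded solution of `u = K_f u` with bounded initial datum `f`
satisfies `|u(x,t)| ≤ sup_y |f(y)|` on `𝕋_m × [0,∞)`. -/
theorem statement2 (m : ℕ) (hm : 2 ≤ m) (F : (Fin m → ℝ) → ℝ) (hF : IsAveraging m F)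
    (f : List (Fin m) → ℝ) (hf : ∃ M : ℝ, ∀ x, |f x| ≤ M)
    (u : List (Fin m) → ℝ → ℝ)
    (hub : ∃ M : ℝ, ∀ x, ∀ t ≥ (0:ℝ), |u x t| ≤ M)
    (huc : ∀ x, ContinuousOn (u x) (Set.Ici (0:ℝ)))
    (hK : ∀ x, ∀ t ≥ (0:ℝ), u x t = Kop m F f u x t) :
    ∀ x, ∀ t ≥ (0:ℝ), |u x t| ≤ ⨆ y : List (Fin m), |f y| := by
  obtain ⟨M, hM⟩ := hub
  obtain ⟨-, -, h1, hh, -, -, hmono⟩ := hF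
  have hconst : ∀ c : ℝ, F (fun _ => c) = c := by
    intro c
    have := hh c (fun _ => 1)
    simpa [h1] using this
  have hFabs : ∀ (v : Fin m → ℝ) (c : ℝ), (∀ i, |v i| ≤ c) → |F v| ≤ c := by
    intro v c hv
    rw [abs_le]
    constructor
    · have := hmono (fun _ => -c) v (fun j => (abs_le.1 (hv j)).1)
      rwa [hconst] at this
    · have := hmono v (fun _ => c) (fun j => (abs_le.1 (hv j)).2)
      rwa [hconst] at this
  set S := ⨆ y : List (Fin m), |f y| with hS
  have hfS : ∀ y, |f y| ≤ S := by
    obtain ⟨B, hB⟩ := hf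
    intro y
    exact le_ciSup (f := fun y => |f y|) ⟨B, by rintro _ ⟨y, rfl⟩; exact hB y⟩ y
  have hS0 : 0 ≤ S := (abs_nonneg _).trans (hfS [])
  have hM0 : 0 ≤ M := (abs_nonneg _).trans (hM [] 0 le_rfl)
  intro x T hT
  have hq1 : 1 - Real.exp (-T) < 1 := by linarith [Real.exp_pos (-T)]
  have hq0 : 0 ≤ 1 - Real.exp (-T) := by
    have : Real.exp (-T) ≤ 1 := Real.exp_le_one_iff.2 (by linarith)
    linarith
  have key : ∀ n : ℕ, ∀ x, ∀ t, 0 ≤ t → t ≤ T →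
      |u x t| ≤ S + M * (1 - Real.exp (-T)) ^ n := by
    intro n
    induction n with
    | zero =>
      intro x t h0 _
      have := hM x t h0
      simp only [pow_zero, mul_one]
      linarith
    | succ n ih =>
      intro x t h0 h1T
      set C := M * (1 - Real.exp (-T)) ^ n with hC
      have hC0 : 0 ≤ C := by positivity
      rw [hK x t h0, Kop]
      have hint : ∫ z in (0:ℝ)..t, Real.exp (z - t) * (S + C)
          = (1 - Real.exp (-t)) * (S + C) := by
        rw [intervalIntegral.integral_mul_const]
        congr 1
        rw [intervalIntegral.integral_comp_sub_right (fun z => Real.exp z), integral_exp]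
        simp
      have hb : |∫ z in (0:ℝ)..t, Real.exp (z - t) * F (fun i => u (x ++ [i]) z)|
          ≤ (1 - Real.exp (-t)) * (S + C) := by
        rw [← hint, ← Real.norm_eq_abs]
        apply intervalIntegral.norm_integral_le_of_norm_le h0
        · refine Filter.Eventually.of_forall fun z hz => ?_
          rw [Real.norm_eq_abs, abs_mul, abs_of_pos (Real.exp_pos _)]
          exact mul_le_mul_of_nonneg_left
            (hFabs _ _ fun i => ih _ z hz.1.le (hz.2.trans h1T)) (Real.exp_pos _).le
        · exact Continuous.intervalIntegrable (by fun_prop) _ _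
      have hb2 : |Real.exp (-t) * f x| ≤ Real.exp (-t) * S := by
        rw [abs_mul, abs_of_pos (Real.exp_pos _)]
        exact mul_le_mul_of_nonneg_left (hfS x) (Real.exp_pos _).le
      have hexp : Real.exp (-T) ≤ Real.exp (-t) := Real.exp_le_exp.2 (by linarith)
      have hfin : C * (1 - Real.exp (-t)) ≤ C * (1 - Real.exp (-T)) :=
        mul_le_mul_of_nonneg_left (by linarith) hC0
      have e : M * (1 - Real.exp (-T)) ^ (n + 1) = C * (1 - Real.exp (-T)) := by
        rw [hC]; ring
      rw [e]
      refine (abs_add_le _ _).trans ?_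
      linarith
  have hlim : Filter.Tendsto (fun n : ℕ => S + M * (1 - Real.exp (-T)) ^ n) Filter.atTop
      (nhds (S + M * 0)) :=
    ((tendsto_pow_atTop_nhds_zero_of_lt_one hq0 hq1).const_mul M).const_add S
  have := ge_of_tendsto' hlim (fun n => key n x T hT le_rfl)
  simpa using this
end

section
/- Let m ≥ 2, let F be an averaging operator, let λ ∈ (0,1), k > 0, and let f : 𝕋_m → ℝ satisfy |f(x)| ≤ k(1−λ)^{l(x)} for all x ∈ 𝕋_m. If u : 𝕋_m × [0,∞) → ℝ is bounded on 𝕋_m × [0,T] for every T > 0, continuous in t for each x, and satisfies u = K_f u, then sup_{x ∈ 𝕋_m} |u(x,t)| ≤ k e^{−λ t} for all t ≥ 0. -/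
open MeasureTheory Real

theorem avg_abs_le {m : ℕ} {F : (Fin m → ℝ) → ℝ} (hF : IsAveraging m F) (v : Fin m → ℝ) (c : ℝ)
    (h : ∀ i, |v i| ≤ c) : |F v| ≤ c := by
  obtain ⟨-, -, h1, hh, -, -, hmono⟩ := hF
  have hc : ∀ c : ℝ, F (fun _ => c) = c := by
    intro c
    have := hh c (fun _ => 1)
    simpa [h1] using this
  rw [abs_le]
  constructor
  · rw [← hc (-c)]
    exact hmono _ _ fun j => (abs_le.1 (h j)).1
  · refine (hmono v (fun _ => c) fun j => (abs_le.1 (h j)).2).trans ?_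
    rw [hc]

/-- if `|f(x)| ≤ k(1−λ)^{l(x)}` with `λ ∈ (0,1)`, `k > 0`, then the
solution of `u = K_f u` satisfies `sup_x |u(x,t)| ≤ k e^{−λt}` for all `t ≥ 0`. -/
theorem statement4 (m : ℕ) (hm : 2 ≤ m) (F : (Fin m → ℝ) → ℝ) (hF : IsAveraging m F)
    (lam k : ℝ) (hlam : 0 < lam) (hlam1 : lam < 1) (hk : 0 < k)
    (f : List (Fin m) → ℝ)
    (hf : ∀ x : List (Fin m), |f x| ≤ k * (1 - lam) ^ x.length)
    (u : List (Fin m) → ℝ → ℝ)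
    (hub : ∀ T > (0:ℝ), ∃ M : ℝ, ∀ x, ∀ t ∈ Set.Icc (0:ℝ) T, |u x t| ≤ M)
    (huc : ∀ x, ContinuousOn (u x) (Set.Ici (0:ℝ)))
    (hK : ∀ x, ∀ t ≥ (0:ℝ), u x t = Kop m F f u x t) :
    ∀ t ≥ (0:ℝ), (⨆ x : List (Fin m), |u x t|) ≤ k * Real.exp (-lam * t) := by
  intro T hT
  obtain ⟨M, hM⟩ := hub (T + 1) (by linarith)
  have hM0 : 0 ≤ M := (abs_nonneg _).trans (hM [] 0 ⟨le_rfl, by linarith⟩)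
  have key : ∀ n : ℕ, ∀ x, ∀ t ∈ Set.Icc (0:ℝ) T,
      |u x t| ≤ k * (1 - lam) ^ x.length * Real.exp (-lam * t) + M * (t ^ n / n.factorial) := by
    intro n
    induction n with
    | zero =>
      intro x t ht
      have := hM x t ⟨ht.1, by linarith [ht.2]⟩
      have h2 : 0 ≤ k * (1 - lam) ^ x.length * Real.exp (-lam * t) := by
        have : 0 < 1 - lam := by linarith
        positivity
      simp
      simp at h2
      linarith
    | succ n ih =>
      intro x t ht
      rw [hK x t ht.1, Kop]
      set g : ℝ → ℝ := fun z => k * (1 - lam) ^ x.length *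
        (Real.exp ((1 - lam) * z - t) * (1 - lam)) + M * (z ^ n / n.factorial) with hg
      have hgc : Continuous g := by rw [hg]; fun_prop
      have hI : ∫ z in (0:ℝ)..t, g z =
          (k * (1 - lam) ^ x.length * Real.exp ((1 - lam) * t - t) +
            M * (t ^ (n+1) / (n+1).factorial)) -
          (k * (1 - lam) ^ x.length * Real.exp ((1 - lam) * 0 - t) +
            M * (0 ^ (n+1) / (n+1).factorial)) := by
        refine intervalIntegral.integral_eq_sub_of_hasDerivAt
          (f := fun z => k * (1 - lam) ^ x.length * Real.exp ((1 - lam) * z - t) +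
            M * (z ^ (n+1) / (n+1).factorial)) (fun z _ => ?_) (hgc.intervalIntegrable _ _)
        have h1 : HasDerivAt (fun z : ℝ => (1 - lam) * z - t) (1 - lam) z := by
          simpa using ((hasDerivAt_id z).const_mul (1 - lam)).sub_const t
        have h2 := (h1.exp.const_mul (k * (1 - lam) ^ x.length)).add
          (((hasDerivAt_pow (n+1) z).div_const ((n+1).factorial : ℝ)).const_mul M)
        refine h2.congr_deriv ?_
        simp only [hg, Nat.factorial_succ]
        have : (n.factorial : ℝ) ≠ 0 := by positivity
        have : (n : ℝ) + 1 ≠ 0 := by positivity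
        push_cast
        field_simp
      have hb : |∫ z in (0:ℝ)..t, Real.exp (z - t) * F (fun i => u (x ++ [i]) z)| ≤
          ∫ z in (0:ℝ)..t, g z := by
        rw [← Real.norm_eq_abs]
        refine intervalIntegral.norm_integral_le_of_norm_le ht.1 ?_ (hgc.intervalIntegrable _ _)
        refine Filter.Eventually.of_forall fun z hz => ?_
        have hFz := avg_abs_le hF (fun i => u (x ++ [i]) z) _ (fun i => by
          have := ih (x ++ [i]) z ⟨hz.1.le, hz.2.trans ht.2⟩
          simpa only [List.length_append, List.length_singleton] using this)
        rw [Real.norm_eq_abs, abs_mul, abs_of_pos (Real.exp_pos _)]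
        refine (mul_le_mul_of_nonneg_left hFz (Real.exp_pos _).le).trans ?_
        have e1 : Real.exp ((1 - lam) * z - t) = Real.exp (z - t) * Real.exp (-lam * z) := by
          rw [← Real.exp_add]; congr 1; ring
        have e2 : Real.exp (z - t) ≤ 1 := Real.exp_le_one_iff.2 (by linarith [hz.2])
        have e3 : 0 ≤ M * (z ^ n / n.factorial) := by
          have := hz.1.le
          positivity
        have e4 := mul_le_mul_of_nonneg_right e2 e3
        simp only [hg]
        rw [e1, pow_succ]
        linarith
      rw [hI] at hb
      have e5 : |Real.exp (-t) * f x| ≤ Real.exp (-t) * (k * (1 - lam) ^ x.length) := by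
        rw [abs_mul, abs_of_pos (Real.exp_pos _)]
        exact mul_le_mul_of_nonneg_left (hf x) (Real.exp_pos _).le
      refine (abs_add_le _ _).trans ((add_le_add hb e5).trans (le_of_eq ?_))
      have e6 : (1 - lam) * t - t = -lam * t := by ring
      have e7 : (1 - lam) * 0 - t = -t := by ring
      rw [e6, e7]
      simp
      ring
  refine ciSup_le fun x => ?_
  have hlim : Filter.Tendsto (fun n : ℕ => k * (1 - lam) ^ x.length * Real.exp (-lam * T) +
      M * (T ^ n / n.factorial)) Filter.atTop
      (nhds (k * (1 - lam) ^ x.length * Real.exp (-lam * T) + M * 0)) :=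
    ((FloorSemiring.tendsto_pow_div_factorial_atTop T).const_mul M).const_add _
  have h1 := ge_of_tendsto' hlim fun n => key n x T ⟨hT, le_rfl⟩
  refine h1.trans ?_
  rw [mul_zero, add_zero]
  refine mul_le_mul_of_nonneg_right ?_ (Real.exp_pos _).le
  exact mul_le_of_le_one_right hk.le (pow_le_one₀ (by linarith) (by linarith))
end

section
/- Let m ≥ 2, let F be an averaging operator, and let a₀ : [0,∞) → ℝ be infinitely differentiable. Define u : 𝕋_m × [0,∞) → ℝ by u(x,t) := Σ_{j=0}^{l(x)} binom(l(x), j) · a₀^{(j)}(t), where a₀^{(j)} denotes the j-th derivative. Then u(∅,t) = a₀(t) for all t, and for every x ∈ 𝕋_m and t ∈ (0,∞), the derivative ∂_t u(x,t) exists and equals F(u((x,0),t),…,u((x,m−1),t)) − u(x,t). -/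
open MeasureTheory Real

/-- for any smooth `a₀`, the function
`u(x,t) = Σ_{j=0}^{l(x)} C(l(x),j) a₀^{(j)}(t)` satisfies `u(∅,t) = a₀(t)` and solves
`∂ₜ u(x,t) = F(u((x,0),t),…,u((x,m−1),t)) − u(x,t)` for `t > 0`. -/
theorem statement5 (m : ℕ) (hm : 2 ≤ m) (F : (Fin m → ℝ) → ℝ) (hF : IsAveraging m F)
    (a₀ : ℝ → ℝ) (ha : ContDiff ℝ (⊤ : ℕ∞) a₀)
    (u : List (Fin m) → ℝ → ℝ)
    (hu : ∀ (x : List (Fin m)) (t : ℝ),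
      u x t = ∑ j ∈ Finset.range (x.length + 1),
        (x.length.choose j : ℝ) * iteratedDeriv j a₀ t) :
    (∀ t : ℝ, u [] t = a₀ t) ∧
    ∀ (x : List (Fin m)), ∀ t > (0:ℝ),
      HasDerivAt (u x) (F (fun i => u (x ++ [i]) t) - u x t) t := by
  obtain ⟨-, h0, -, -, htr, -, -⟩ := hF
  have hconst : ∀ c : ℝ, F (fun _ => c) = c := by
    intro c
    have h := htr c (fun _ => 0)
    simpa [h0] using h
  refine ⟨fun t => by simp [hu], fun x t _ => ?_⟩
  have hd : ∀ j : ℕ, HasDerivAt (iteratedDeriv j a₀) (iteratedDeriv (j + 1) a₀ t) t := by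
    intro j
    rw [iteratedDeriv_succ]
    refine DifferentiableAt.hasDerivAt ?_
    exact (ha.differentiable_iteratedDeriv j (by exact_mod_cast WithTop.coe_lt_top _)) t
  have hux : u x = fun s => ∑ j ∈ Finset.range (x.length + 1),
      (x.length.choose j : ℝ) * iteratedDeriv j a₀ s := funext (hu x)
  have hsucc : ∀ i : Fin m, u (x ++ [i]) t = (∑ j ∈ Finset.range (x.length + 1),
      (x.length.choose j : ℝ) * iteratedDeriv (j + 1) a₀ t) + u x t := by
    intro i
    rw [hu, hu]
    simp only [List.length_append, List.length_singleton]
    generalize x.length = n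
    rw [Finset.sum_range_succ']
    simp only [Nat.choose_succ_succ, Nat.cast_add, add_mul, Finset.sum_add_distrib]
    rw [add_assoc]
    congr 1
    rw [Finset.sum_range_succ, Finset.sum_range_succ' (fun j => (n.choose j : ℝ) * _)]
    simp
  simp only [hsucc, hconst, add_sub_cancel_right]
  rw [hux]
  exact HasDerivAt.fun_sum fun j _ => (hd j).const_mul _
end

section
/- Let m ≥ 2, let F be an averaging operator, let C > 0, λ > 0, and let f : 𝕋_m → ℝ satisfy 0 ≤ f(x) ≤ C λ^{l(x)} for all x ∈ 𝕋_m (f is possibly unbounded). Then there exists u : 𝕋_m × [0,∞) → ℝ such that for each x ∈ 𝕋_m the map t ↦ u(x,t) is continuous, 0 ≤ u(x,t) ≤ C e^{(λ−1)t} λ^{l(x)} for all (x,t), and u(x,t) = K_f u(x,t) for all (x,t) ∈ 𝕋_m × [0,∞). -/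
open MeasureTheory Real

lemma Kop_eq (m : ℕ) (F : (Fin m → ℝ) → ℝ) (f : List (Fin m) → ℝ)
    (u : List (Fin m) → ℝ → ℝ) (x : List (Fin m)) (t : ℝ) :
    Kop m F f u x t =
      Real.exp (-t) * ((∫ z in (0:ℝ)..t, Real.exp z * F (fun i => u (x ++ [i]) z)) + f x) := by
  unfold Kop
  rw [mul_add, ← intervalIntegral.integral_const_mul]
  congr 2
  ext z
  rw [sub_eq_add_neg, Real.exp_add]
  ring

noncomputable def iterV (m : ℕ) (F : (Fin m → ℝ) → ℝ) (f : List (Fin m) → ℝ) :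
    ℕ → List (Fin m) → ℝ → ℝ
  | 0 => fun _ _ => 0
  | n + 1 => fun x t => Kop m F f (iterV m F f n) x (max t 0)

noncomputable def bndB (C lam : ℝ) (k : ℕ) (t : ℝ) : ℝ :=
  C * Real.exp ((lam - 1) * (max t 0)) * lam ^ k

lemma bndB_cont (C lam : ℝ) (k : ℕ) : Continuous (bndB C lam k) := by
  unfold bndB
  fun_prop

lemma F_const {m : ℕ} {F : (Fin m → ℝ) → ℝ} (hF : IsAveraging m F) (c : ℝ) :
    F (fun _ => c) = c := by
  have h := hF.2.2.2.1 c (fun _ => 1)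
  rw [hF.2.2.1] at h
  simpa using h

lemma int_exp (C lam : ℝ) (k : ℕ) (t : ℝ) (ht : 0 ≤ t) :
    (∫ z in (0:ℝ)..t, Real.exp z * bndB C lam (k+1) z) + C * lam ^ k
      = C * lam ^ k * Real.exp (lam * t) := by
  have h1 : ∫ z in (0:ℝ)..t, Real.exp z * bndB C lam (k+1) z
      = ∫ z in (0:ℝ)..t, C * lam ^ k * (Real.exp (lam * z) * lam) := by
    apply intervalIntegral.integral_congr
    intro z hz
    rw [Set.uIcc_of_le ht] at hz
    simp only [bndB, max_eq_left hz.1]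
    have : Real.exp (lam * z) = Real.exp z * Real.exp ((lam - 1) * z) := by
      rw [← Real.exp_add]; ring_nf
    rw [this]; ring
  rw [h1, intervalIntegral.integral_const_mul]
  have h2 : ∫ z in (0:ℝ)..t, Real.exp (lam * z) * lam
      = Real.exp (lam * t) - Real.exp (lam * 0) := by
    apply intervalIntegral.integral_eq_sub_of_hasDerivAt
    · intro z _
      have := ((hasDerivAt_id z).const_mul lam).exp
      simpa using this
    · apply Continuous.intervalIntegrable; fun_prop
  rw [h2]; simp; ring

lemma g_cont {m : ℕ} {F : (Fin m → ℝ) → ℝ} (hF : IsAveraging m F)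
    {u : List (Fin m) → ℝ → ℝ} (hu : ∀ x, Continuous (u x)) (x : List (Fin m)) :
    Continuous (fun z => Real.exp z * F (fun i => u (x ++ [i]) z)) :=
  Real.continuous_exp.mul (hF.1.comp (continuous_pi fun i => hu _))

lemma K_cont {m : ℕ} {F : (Fin m → ℝ) → ℝ} {f : List (Fin m) → ℝ}
    {u : List (Fin m) → ℝ → ℝ} (x : List (Fin m))
    (hu : ∀ a b, IntervalIntegrable
      (fun z => Real.exp z * F (fun i => u (x ++ [i]) z)) volume a b) :
    Continuous (fun t => Kop m F f u x t) := by
  simp only [Kop_eq]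
  have := intervalIntegral.continuous_primitive hu 0
  fun_prop

lemma iterV_cont {m : ℕ} {F : (Fin m → ℝ) → ℝ} (hF : IsAveraging m F)
    {f : List (Fin m) → ℝ} (n : ℕ) : ∀ x, Continuous (iterV m F f n x) := by
  induction n with
  | zero => intro x; exact continuous_const
  | succ n ih =>
    intro x
    have h := K_cont (f := f) x (fun a b => (g_cont hF ih x).intervalIntegrable a b)
    exact h.comp (continuous_id.max continuous_const)

lemma F_nonneg {m : ℕ} {F : (Fin m → ℝ) → ℝ} (hF : IsAveraging m F)
    {y : Fin m → ℝ} (h : ∀ j, 0 ≤ y j) : 0 ≤ F y := by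
  have := hF.2.2.2.2.2.2 (fun _ => 0) y h
  rwa [F_const hF] at this

lemma F_le {m : ℕ} {F : (Fin m → ℝ) → ℝ} (hF : IsAveraging m F)
    {y : Fin m → ℝ} {c : ℝ} (h : ∀ j, y j ≤ c) : F y ≤ c := by
  have := hF.2.2.2.2.2.2 y (fun _ => c) h
  rwa [F_const hF] at this

lemma K_mono {m : ℕ} {F : (Fin m → ℝ) → ℝ} (hF : IsAveraging m F)
    {f : List (Fin m) → ℝ} {u v : List (Fin m) → ℝ → ℝ}
    (hu : ∀ x, Continuous (u x)) (hv : ∀ x, Continuous (v x))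
    (h : ∀ x t, u x t ≤ v x t) (x : List (Fin m)) (t : ℝ) (ht : 0 ≤ t) :
    Kop m F f u x t ≤ Kop m F f v x t := by
  rw [Kop_eq, Kop_eq]
  have := intervalIntegral.integral_mono (μ := volume) ht
    ((g_cont hF hu x).intervalIntegrable 0 t) ((g_cont hF hv x).intervalIntegrable 0 t)
    (fun z => mul_le_mul_of_nonneg_left
      (hF.2.2.2.2.2.2 _ _ (fun j => h (x ++ [j]) z)) (Real.exp_pos z).le)
  gcongr

lemma K_bdB {m : ℕ} {F : (Fin m → ℝ) → ℝ} (hF : IsAveraging m F) {C lam : ℝ}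
    {f : List (Fin m) → ℝ} (hf : ∀ x : List (Fin m), 0 ≤ f x ∧ f x ≤ C * lam ^ x.length)
    (x : List (Fin m)) (t : ℝ) (ht : 0 ≤ t) :
    Kop m F f (fun x => bndB C lam x.length) x t ≤ bndB C lam x.length t := by
  rw [Kop_eq]
  simp only [F_const hF, List.length_append, List.length_singleton]
  have h1 := int_exp C lam x.length t ht
  have h2 : bndB C lam x.length t = Real.exp (-t) * (C * lam ^ x.length * Real.exp (lam * t)) := by
    simp only [bndB, max_eq_left ht]
    have : Real.exp ((lam - 1) * t) = Real.exp (-t) * Real.exp (lam * t) := by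
      rw [← Real.exp_add]; ring_nf
    rw [this]; ring
  rw [h2, ← h1]
  have := (hf x).2
  gcongr

lemma iterV_le {m : ℕ} {F : (Fin m → ℝ) → ℝ} (hF : IsAveraging m F) {C lam : ℝ}
    (hC : 0 < C) (hlam : 0 < lam)
    {f : List (Fin m) → ℝ} (hf : ∀ x : List (Fin m), 0 ≤ f x ∧ f x ≤ C * lam ^ x.length)
    (n : ℕ) : ∀ x t, iterV m F f n x t ≤ bndB C lam x.length t := by
  induction n with
  | zero => intro x t; simp only [iterV, bndB]; positivity
  | succ n ih =>
    intro x t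
    have h1 := K_mono (f := f) hF (iterV_cont hF n) (v := fun x => bndB C lam x.length)
      (fun x => bndB_cont C lam _) ih x (max t 0) (le_max_right _ _)
    have h2 := K_bdB hF hf x (max t 0) (le_max_right _ _)
    have h3 : bndB C lam x.length (max t 0) = bndB C lam x.length t := by simp [bndB]
    rw [h3] at h2
    exact h1.trans h2

lemma iterV_mono {m : ℕ} {F : (Fin m → ℝ) → ℝ} (hF : IsAveraging m F)
    {f : List (Fin m) → ℝ} (hf : ∀ x : List (Fin m), 0 ≤ f x)
    (n : ℕ) : ∀ x t, iterV m F f n x t ≤ iterV m F f (n+1) x t := by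
  induction n with
  | zero =>
    intro x t
    simp only [iterV, Kop_eq, F_const hF]
    have := hf x
    simp
    positivity
  | succ n ih =>
    intro x t
    exact K_mono hF (iterV_cont hF n) (iterV_cont hF (n+1)) ih x (max t 0) (le_max_right _ _)


/-- existence of a solution of `u = K_f u` for a possibly unbounded
initial datum `f` with `0 ≤ f(x) ≤ C λ^{l(x)}`, satisfying
`0 ≤ u(x,t) ≤ C e^{(λ−1)t} λ^{l(x)}`. -/
theorem statement10 (m : ℕ) (hm : 2 ≤ m) (F : (Fin m → ℝ) → ℝ) (hF : IsAveraging m F)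
    (C lam : ℝ) (hC : 0 < C) (hlam : 0 < lam)
    (f : List (Fin m) → ℝ)
    (hf : ∀ x : List (Fin m), 0 ≤ f x ∧ f x ≤ C * lam ^ x.length) :
    ∃ u : List (Fin m) → ℝ → ℝ,
      (∀ x, ContinuousOn (u x) (Set.Ici (0:ℝ))) ∧
      (∀ x : List (Fin m), ∀ t ≥ (0:ℝ),
        0 ≤ u x t ∧ u x t ≤ C * Real.exp ((lam - 1) * t) * lam ^ x.length) ∧
      (∀ x, ∀ t ≥ (0:ℝ), u x t = Kop m F f u x t) := by
  have hmono : ∀ x t, Monotone (fun n => iterV m F f n x t) := fun x t =>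
    monotone_nat_of_le_succ (fun n => iterV_mono hF (fun x => (hf x).1) n x t)
  have hle := iterV_le hF hC hlam hf
  have hnn : ∀ n x t, 0 ≤ iterV m F f n x t := fun n x t => hmono x t (Nat.zero_le n)
  set u : List (Fin m) → ℝ → ℝ := fun x t => ⨆ n, iterV m F f n x t with hu
  have hlim : ∀ x t, Filter.Tendsto (fun n => iterV m F f n x t) Filter.atTop (nhds (u x t)) :=
    fun x t => tendsto_atTop_ciSup (hmono x t)
      ⟨bndB C lam x.length t, by rintro _ ⟨n, rfl⟩; exact hle n x t⟩
  have hu0 : ∀ x t, 0 ≤ u x t := fun x t => ge_of_tendsto' (hlim x t) (fun n => hnn n x t)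
  have huB : ∀ x t, u x t ≤ bndB C lam x.length t :=
    fun x t => le_of_tendsto' (hlim x t) (fun n => hle n x t)
  have hglim : ∀ (x : List (Fin m)) z, Filter.Tendsto
      (fun n => Real.exp z * F (fun i => iterV m F f n (x ++ [i]) z)) Filter.atTop
      (nhds (Real.exp z * F (fun i => u (x ++ [i]) z))) := fun x z =>
    ((hF.1.tendsto _).comp (tendsto_pi_nhds.2 fun i => hlim (x ++ [i]) z)).const_mul _
  have hbd : ∀ (x : List (Fin m)) (y : Fin m → ℝ) z, (∀ i, 0 ≤ y i) →
      (∀ i, y i ≤ bndB C lam (x ++ [i]).length z) →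
      ‖Real.exp z * F y‖ ≤ Real.exp z * bndB C lam (x.length + 1) z := by
    intro x y z h0 h1
    rw [Real.norm_of_nonneg (mul_nonneg (Real.exp_pos z).le (F_nonneg hF h0))]
    exact mul_le_mul_of_nonneg_left (F_le hF (fun j => by simpa using h1 j)) (Real.exp_pos z).le
  have hBint : ∀ k a b, IntervalIntegrable (fun z => Real.exp z * bndB C lam k z) volume a b :=
    fun k a b => (Real.continuous_exp.mul (bndB_cont C lam k)).intervalIntegrable a b
  have hmeas : ∀ x : List (Fin m), Measurable
      (fun z => Real.exp z * F (fun i => u (x ++ [i]) z)) := fun x =>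
    measurable_of_tendsto_metrizable (fun n => (g_cont hF (iterV_cont (f := f) hF n) x).measurable)
      (tendsto_pi_nhds.2 fun z => hglim x z)
  have hint : ∀ (x : List (Fin m)) a b, IntervalIntegrable
      (fun z => Real.exp z * F (fun i => u (x ++ [i]) z)) volume a b := fun x a b =>
    (hBint (x.length + 1) a b).mono_fun' (hmeas x).aestronglyMeasurable
      (Filter.Eventually.of_forall fun z =>
        hbd x _ z (fun i => hu0 _ _) (fun i => huB _ _))
  have hfix : ∀ x, ∀ t ≥ (0:ℝ), u x t = Kop m F f u x t := by
    intro x t ht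
    have h1 := (hlim x t).comp (Filter.tendsto_add_atTop_nat 1)
    refine tendsto_nhds_unique h1 ?_
    have h2 : (fun n => iterV m F f n x t) ∘ (fun n => n + 1)
        = fun n => Kop m F f (iterV m F f n) x t := by
      ext n
      simp [iterV, max_eq_left ht]
    rw [h2]
    simp only [Kop_eq]
    refine Filter.Tendsto.const_mul _ (Filter.Tendsto.add_const _ ?_)
    refine intervalIntegral.tendsto_integral_filter_of_dominated_convergence
      (fun z => Real.exp z * bndB C lam (x.length + 1) z) ?_ ?_ (hBint _ _ _) ?_
    · exact Filter.Eventually.of_forall fun n =>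
        (g_cont hF (iterV_cont (f := f) hF n) x).aestronglyMeasurable
    · exact Filter.Eventually.of_forall fun n => Filter.Eventually.of_forall fun z _ =>
        hbd x _ z (fun i => hnn _ _ _) (fun i => hle _ _ _)
    · exact Filter.Eventually.of_forall fun z _ => hglim x z
  refine ⟨u, ?_, ?_, hfix⟩
  · intro x
    exact (K_cont (f := f) x (hint x)).continuousOn.congr (fun t ht => hfix x t ht)
  · intro x t ht
    refine ⟨hu0 x t, ?_⟩
    have := huB x t
    simpa only [bndB, max_eq_left ht] using this
end

section
/- Let m ≥ 2, let F be an averaging operator, and let n ∈ ℕ, n ≥ 1. Define f_n : 𝕋_m → ℝ by f_n(x) := n! if l(x) = n and f_n(x) := 0 otherwise, and define u_n : 𝕋_m × [0,∞) → ℝ by u_n(x,t) := e^{−t} · (n!/(n−l(x))!) · t^{n−l(x)} if l(x) ≤ n and u_n(x,t) := 0 if l(x) > n. Then u_n(x,0) = f_n(x) for all x; for every x ∈ 𝕋_m and t ∈ (0,∞) the derivative ∂_t u_n(x,t) exists and equals F(u_n((x,0),t),…,u_n((x,m−1),t)) − u_n(x,t); and for every t ≥ n, sup_{x ∈ 𝕋_m}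 |u_n(x,t)| = t^n e^{−t}. -/
open MeasureTheory Real

/-- for `f_n = n! 𝟙_{l(x)=n}`, the function
`u_n(x,t) = e^{−t} (n!/(n−l(x))!) t^{n−l(x)}` (for `l(x) ≤ n`, and `0` otherwise)
has initial value `f_n`, solves the equation, and `sup_x |u_n(x,t)| = tⁿ e^{−t}`
for `t ≥ n`. -/
theorem statement12 (m : ℕ) (hm : 2 ≤ m) (F : (Fin m → ℝ) → ℝ) (hF : IsAveraging m F)
    (n : ℕ) (hn : 1 ≤ n)
    (fn : List (Fin m) → ℝ)
    (hfn : ∀ x : List (Fin m), fn x = if x.length = n then (n.factorial : ℝ) else 0)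
    (un : List (Fin m) → ℝ → ℝ)
    (hun : ∀ (x : List (Fin m)) (t : ℝ),
      un x t = if x.length ≤ n then
          Real.exp (-t) * ((n.factorial : ℝ) / ((n - x.length).factorial : ℝ)) *
            t ^ (n - x.length)
        else 0) :
    (∀ x : List (Fin m), un x 0 = fn x) ∧
    (∀ (x : List (Fin m)), ∀ t > (0:ℝ),
      HasDerivAt (un x) (F (fun i => un (x ++ [i]) t) - un x t) t) ∧
    (∀ t : ℝ, (n : ℝ) ≤ t →
      (⨆ x : List (Fin m), |un x t|) = t ^ n * Real.exp (-t)) := by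
  obtain ⟨-, h0, h1, hmul, -, -, -⟩ := hF
  have hc : ∀ c : ℝ, F (fun _ => c) = c := by
    intro c
    have := hmul c (fun _ => 1)
    simpa [h1] using this
  refine ⟨?_, ?_, ?_⟩
  · intro x
    rw [hun, hfn]
    rcases lt_trichotomy x.length n with h | h | h
    · have h2 : n - x.length ≠ 0 := by omega
      simp [h.le, h.ne, h2]
    · simp [h]
    · simp [h.ne', not_le.mpr h]
  · intro x t ht
    have hfun : un x = fun t => if x.length ≤ n then
          Real.exp (-t) * ((n.factorial : ℝ) / ((n - x.length).factorial : ℝ)) *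
            t ^ (n - x.length)
        else 0 := funext (hun x)
    have hs : ∀ i : Fin m, un (x ++ [i]) t = if x.length + 1 ≤ n then
          Real.exp (-t) * ((n.factorial : ℝ) / ((n - (x.length + 1)).factorial : ℝ)) *
            t ^ (n - (x.length + 1))
        else 0 := by
      intro i
      rw [hun]
      simp
    simp only [hs, hc]
    rw [hfun]
    have he : HasDerivAt (fun t : ℝ => Real.exp (-t)) (-Real.exp (-t)) t := by
      simpa using (hasDerivAt_neg t).exp
    generalize x.length = l
    rcases lt_trichotomy l n with h | h | h
    · obtain ⟨k, rfl⟩ : ∃ k, n = l + 1 + k := ⟨n - (l + 1), by omega⟩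
      have e1 : l + 1 + k - l = k + 1 := by omega
      have e2 : l + 1 + k - (l + 1) = k := by omega
      have e3 : l ≤ l + 1 + k := by omega
      have e4 : l + 1 ≤ l + 1 + k := by omega
      simp only [e1, e2, e3, e4, if_true]
      have := (he.mul_const (((l + 1 + k).factorial : ℝ) / ((k + 1).factorial : ℝ))).mul
        (hasDerivAt_pow (k + 1) t)
      refine this.congr_deriv ?_
      have hk : (k.factorial : ℝ) ≠ 0 := by positivity
      have hk1 : (k : ℝ) + 1 ≠ 0 := by positivity
      rw [Nat.factorial_succ k]
      push_cast
      field_simp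
      ring
    · subst h
      simp only [le_refl, if_true, Nat.sub_self, pow_zero, Nat.factorial_zero]
      have e : ¬ (l + 1 ≤ l) := by omega
      simp only [e, if_false]
      have := he.mul_const ((l.factorial : ℝ))
      simpa using this
    · have e : ¬ (l ≤ n) := by omega
      have e' : ¬ (l + 1 ≤ n) := by omega
      simp only [e, e', if_false, sub_zero]
      exact hasDerivAt_const t 0
  · intro t ht
    have ht0 : 0 ≤ t := le_trans (Nat.cast_nonneg n) ht
    have hb : ∀ x : List (Fin m), |un x t| ≤ t ^ n * Real.exp (-t) := by
      intro x
      rw [hun]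
      split_ifs with h
      · rw [abs_of_nonneg (by positivity)]
        have hd : (n.factorial : ℝ) / ((n - x.length).factorial : ℝ) ≤ t ^ x.length := by
          rw [div_le_iff₀ (by positivity), ← Nat.factorial_mul_descFactorial h]
          push_cast
          rw [mul_comm]
          have : (n.descFactorial x.length : ℝ) ≤ t ^ x.length := by
            calc (n.descFactorial x.length : ℝ) ≤ (n : ℝ) ^ x.length := by
                  exact_mod_cast Nat.descFactorial_le_pow n x.length
              _ ≤ t ^ x.length := by gcongr
          gcongr
        calc Real.exp (-t) * ((n.factorial : ℝ) / ((n - x.length).factorial : ℝ)) *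
              t ^ (n - x.length)
            ≤ Real.exp (-t) * t ^ x.length * t ^ (n - x.length) := by gcongr
          _ = t ^ n * Real.exp (-t) := by
            rw [mul_assoc, ← pow_add, Nat.add_sub_cancel' h, mul_comm]
      · rw [abs_zero]
        positivity
    apply le_antisymm (ciSup_le hb)
    have hroot : |un [] t| = t ^ n * Real.exp (-t) := by
      rw [hun]
      have hk : (n.factorial : ℝ) ≠ 0 := by positivity
      simp only [List.length_nil, Nat.zero_le, if_true, Nat.sub_zero, div_self hk, mul_one]
      rw [abs_of_nonneg (by positivity), mul_comm]
    rw [← hroot]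
    exact le_ciSup (f := fun x : List (Fin m) => |un x t|)
      ⟨_, by rintro _ ⟨x, rfl⟩; exact hb x⟩ []
end

section
/- Let m ≥ 2 and let F be an averaging operator. Define u : 𝕋_m × [0,∞) → ℝ by u(x,t) := Σ_{j=0}^{l(x)} (−1)^j · (l(x)!/(l(x)−j)!) · (1+t)^{−(j+1)}. Then for every x ∈ 𝕋_m and t ∈ (0,∞), the derivative ∂_t u(x,t) exists and equals F(u((x,0),t),…,u((x,m−1),t)) − u(x,t), and u(x,0) = (−1)^{l(x)} · D_{l(x)}, where D_n denotes the number of derangements of an n-element set. -/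
open MeasureTheory Real

noncomputable def gAux (n : ℕ) (t : ℝ) : ℝ :=
  ∑ j ∈ Finset.range (n + 1),
        (-1 : ℝ) ^ j * ((n.factorial : ℝ) / ((n - j).factorial : ℝ)) *
          ((1 + t) ^ (j + 1))⁻¹

theorem gAux_zero (t : ℝ) : gAux 0 t = (1 + t)⁻¹ := by
  simp [gAux]

theorem gAux_succ (n : ℕ) (t : ℝ) :
    gAux (n + 1) t = (1 + t)⁻¹ - (n + 1) * (1 + t)⁻¹ * gAux n t := by
  unfold gAux
  rw [Finset.sum_range_succ', Finset.mul_sum, sub_eq_neg_add, ← Finset.sum_neg_distrib]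
  congr 1
  · apply Finset.sum_congr rfl
    intro j _
    rw [Nat.add_sub_add_right, Nat.factorial_succ, pow_succ (1 + t) (j + 1), mul_inv]
    push_cast
    ring
  · have : ((n + 1).factorial : ℝ) ≠ 0 := by positivity
    simp [this]

theorem gAux_deriv (n : ℕ) (t : ℝ) (ht : 0 < t) :
    HasDerivAt (gAux n) (gAux (n + 1) t - gAux n t) t := by
  have hs : (1 + t) ≠ 0 := by positivity
  have hinv : HasDerivAt (fun t : ℝ => (1 + t)⁻¹) (-1 / (1 + t) ^ 2) t :=
    ((hasDerivAt_id t).const_add 1).inv hs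
  induction n with
  | zero =>
    have : gAux 0 = fun t : ℝ => (1 + t)⁻¹ := funext gAux_zero
    rw [gAux_succ, gAux_zero, this]
    convert hinv using 1
    push_cast
    field_simp
    ring
  | succ n ih =>
    have h : gAux (n + 1) = fun t : ℝ => (1 + t)⁻¹ - (n + 1) * (1 + t)⁻¹ * gAux n t :=
      funext (gAux_succ n)
    have hd := hinv.sub ((hinv.const_mul ((n : ℝ) + 1)).mul ih)
    rw [gAux_succ (n + 1), h]
    refine hd.congr_deriv ?_
    rw [gAux_succ n]
    push_cast
    field_simp
    ring

theorem gAux_init (n : ℕ) : gAux n 0 = (-1 : ℝ) ^ n * (numDerangements n : ℝ) := by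
  induction n with
  | zero => simp [gAux_zero]
  | succ n ih =>
    have h : (numDerangements (n + 1) : ℝ) = (n + 1) * numDerangements n - (-1) ^ n := by
      exact_mod_cast numDerangements_succ n
    have h2 : (-1 : ℝ) ^ n * (-1) ^ n = 1 := by
      rw [← mul_pow]; simp
    rw [gAux_succ, ih, h, pow_succ]
    simp only [add_zero, inv_one]
    linear_combination -h2

/-- `u(x,t) = Σ_{j=0}^{l(x)} (−1)^j (l(x)!/(l(x)−j)!) (1+t)^{−(j+1)}`
solves the equation for `t > 0` and has initial value `(−1)^{l(x)} D_{l(x)}`,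
where `D_n = numDerangements n` is the number of derangements of an `n`-element set. -/
theorem statement15 (m : ℕ) (hm : 2 ≤ m) (F : (Fin m → ℝ) → ℝ) (hF : IsAveraging m F)
    (u : List (Fin m) → ℝ → ℝ)
    (hu : ∀ (x : List (Fin m)) (t : ℝ),
      u x t = ∑ j ∈ Finset.range (x.length + 1),
        (-1 : ℝ) ^ j * ((x.length.factorial : ℝ) / ((x.length - j).factorial : ℝ)) *
          ((1 + t) ^ (j + 1))⁻¹) :
    (∀ (x : List (Fin m)), ∀ t > (0:ℝ),
      HasDerivAt (u x) (F (fun i => u (x ++ [i]) t) - u x t) t) ∧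
    (∀ x : List (Fin m),
      u x 0 = (-1 : ℝ) ^ x.length * (numDerangements x.length : ℝ)) := by
  have hg : ∀ x, u x = gAux x.length := fun x => funext (hu x)
  obtain ⟨-, h0, -, -, hT, -, -⟩ := hF
  refine ⟨fun x t ht => ?_, fun x => by rw [hg, gAux_init]⟩
  have hc : F (fun i => u (x ++ [i]) t) = gAux (x.length + 1) t := by
    have := hT (gAux (x.length + 1) t) (fun _ => 0)
    rw [h0] at this
    simpa [hg] using this
  rw [hc, hg]
  exact gAux_deriv _ _ ht
end

section
/- Let m ≥ 2, let F be an averaging operator, and let f : 𝕋_m → ℝ be bounded with finite support, f not identically zero, so that a(f) ≥ 1 and μ(f) = a(f) − 1. If u : 𝕋_m × [0,∞) → ℝ is bounded on 𝕋_m × [0,T] for every T > 0, continuous in t for each x, and satisfies u = K_f u, then u(x,t) = 0 for all t ≥ 0 and all x with l(x) ≥ a(f), and u(x,t) = f(x) e^{−t} for all t ≥ 0 and all x with l(x) = μ(f). -/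
open MeasureTheory Real

/-- `a(f)`: the least `j` such that `f` vanishes on all vertices of level `≥ j`. -/
noncomputable def aOf (m : ℕ) (f : List (Fin m) → ℝ) : ℕ :=
  sInf {j : ℕ | ∀ x : List (Fin m), j ≤ x.length → f x = 0}

/-- `μ(f) = a(f) − 1` if `a(f) > 0` and `μ(f) = 0` otherwise
(truncated subtraction on `ℕ`). -/
noncomputable def muOf (m : ℕ) (f : List (Fin m) → ℝ) : ℕ := aOf m f - 1

lemma aux_F {m : ℕ} {F : (Fin m → ℝ) → ℝ} (hF : IsAveraging m F) (v : Fin m → ℝ) (B : ℝ)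
    (h : ∀ j, |v j| ≤ B) : |F v| ≤ B := by
  obtain ⟨-, -, h1, hh, -, -, hmono⟩ := hF
  have hc : ∀ c : ℝ, F (fun _ => c) = c := by
    intro c
    have := hh c (fun _ => 1)
    simpa [h1] using this
  rw [abs_le]
  constructor
  · have := hmono (fun _ => -B) v (fun j => (abs_le.mp (h j)).1)
    rwa [hc] at this
  · have := hmono v (fun _ => B) (fun j => (abs_le.mp (h j)).2)
    rwa [hc] at this

lemma aux_int (t B : ℝ) :
    (∫ z in (0:ℝ)..t, Real.exp (z - t) * B) = (1 - Real.exp (-t)) * B := by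
  rw [intervalIntegral.integral_mul_const]
  congr 1
  rw [intervalIntegral.integral_comp_sub_right (fun z => Real.exp z) t, integral_exp]
  simp

/-- for a finitely supported, not identically zero initial datum `f`
(so `a(f) ≥ 1` and `μ(f) = a(f) − 1`), the solution of `u = K_f u` vanishes at all
levels `≥ a(f)` and equals `f(x) e^{−t}` at level `μ(f)`. -/
theorem statement17 (m : ℕ) (hm : 2 ≤ m) (F : (Fin m → ℝ) → ℝ) (hF : IsAveraging m F)
    (f : List (Fin m) → ℝ) (hf : ∃ M : ℝ, ∀ x, |f x| ≤ M)
    (hsupp : ∃ n : ℕ, ∀ x : List (Fin m), n ≤ x.length → f x = 0)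
    (hne : ∃ x : List (Fin m), f x ≠ 0)
    (u : List (Fin m) → ℝ → ℝ)
    (hub : ∀ T > (0:ℝ), ∃ M : ℝ, ∀ x, ∀ t ∈ Set.Icc (0:ℝ) T, |u x t| ≤ M)
    (huc : ∀ x, ContinuousOn (u x) (Set.Ici (0:ℝ)))
    (hK : ∀ x, ∀ t ≥ (0:ℝ), u x t = Kop m F f u x t) :
    1 ≤ aOf m f ∧ muOf m f = aOf m f - 1 ∧
    (∀ x : List (Fin m), aOf m f ≤ x.length → ∀ t ≥ (0:ℝ), u x t = 0) ∧
    (∀ x : List (Fin m), x.length = muOf m f → ∀ t ≥ (0:ℝ),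
      u x t = f x * Real.exp (-t)) := by
  have hz : ∀ x : List (Fin m), aOf m f ≤ x.length → f x = 0 :=
    Nat.sInf_mem (s := {j : ℕ | ∀ x : List (Fin m), j ≤ x.length → f x = 0}) hsupp
  have ha : 1 ≤ aOf m f := by
    by_contra h
    obtain ⟨x, hx⟩ := hne
    exact hx (hz x (by omega))
  have hu0 : ∀ x : List (Fin m), aOf m f ≤ x.length → ∀ t ≥ (0:ℝ), u x t = 0 := by
    intro x hx t ht
    obtain ⟨M, hM⟩ := hub (t + 1) (by linarith)
    have hM0 : 0 ≤ M := le_trans (abs_nonneg _) (hM [] 0 ⟨le_refl _, by linarith⟩)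
    set c : ℝ := 1 - Real.exp (-(t + 1)) with hc
    have hc0 : 0 ≤ c := by
      have : Real.exp (-(t + 1)) ≤ 1 := Real.exp_le_one_iff.mpr (by linarith)
      linarith
    have hc1 : c < 1 := by
      have := Real.exp_pos (-(t + 1))
      linarith
    have key : ∀ k : ℕ, ∀ y : List (Fin m), aOf m f ≤ y.length →
        ∀ s ∈ Set.Icc (0:ℝ) (t + 1), |u y s| ≤ c ^ k * M := by
      intro k
      induction k with
      | zero => intro y _ s hs; simpa using hM y s hs
      | succ k ih =>
        intro y hy s hs
        rw [hK y s hs.1, Kop, hz y hy, mul_zero, add_zero]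
        have h1 : ‖∫ z in (0:ℝ)..s, Real.exp (z - s) * F (fun i => u (y ++ [i]) z)‖ ≤
            ∫ z in (0:ℝ)..s, Real.exp (z - s) * (c ^ k * M) := by
          apply intervalIntegral.norm_integral_le_of_norm_le hs.1
          · refine Filter.Eventually.of_forall fun z hzz => ?_
            rw [norm_mul, Real.norm_eq_abs, Real.norm_eq_abs, abs_of_pos (Real.exp_pos _)]
            refine mul_le_mul_of_nonneg_left ?_ (Real.exp_pos _).le
            refine aux_F hF _ _ fun j => ih _ ?_ z ⟨hzz.1.le, hzz.2.trans hs.2⟩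
            simp
            omega
          · apply Continuous.intervalIntegrable
            fun_prop
        rw [aux_int, Real.norm_eq_abs] at h1
        refine h1.trans ?_
        have h2 : 1 - Real.exp (-s) ≤ c := by
          have : Real.exp (-(t + 1)) ≤ Real.exp (-s) := Real.exp_le_exp.mpr (by linarith [hs.2])
          linarith
        calc (1 - Real.exp (-s)) * (c ^ k * M) ≤ c * (c ^ k * M) :=
              mul_le_mul_of_nonneg_right h2 (by positivity)
          _ = c ^ (k + 1) * M := by ring
    have hlim : Filter.Tendsto (fun k : ℕ => c ^ k * M) Filter.atTop (nhds 0) := by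
      simpa using (tendsto_pow_atTop_nhds_zero_of_lt_one hc0 hc1).mul_const M
    have := ge_of_tendsto' hlim (fun k => key k x hx t ⟨ht, by linarith⟩)
    exact abs_nonpos_iff.mp this
  refine ⟨ha, rfl, hu0, ?_⟩
  intro x hx t ht
  have hF0 : F (fun _ => 0) = 0 := hF.2.1
  have h0 : (∫ z in (0:ℝ)..t, Real.exp (z - t) * F (fun i => u (x ++ [i]) z)) =
      ∫ z in (0:ℝ)..t, (0:ℝ) := by
    apply intervalIntegral.integral_congr
    intro z hzz
    rw [Set.uIcc_of_le ht] at hzz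
    have : (fun i => u (x ++ [i]) z) = fun _ => (0:ℝ) := by
      funext i
      refine hu0 _ ?_ z hzz.1
      simp [hx, muOf]
      omega
    simp only [this, hF0, mul_zero]
  rw [hK x t ht, Kop, h0]
  simp [mul_comm]
end
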